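/- arXiv:2603.12024 — 2 statements merged into one kernel-verified Lean document; each statement's English description precedes it below -/
import Mathlib

section
/- If a PMD {M^{a|x}} is star-compatible with respect to x*, then the prepare-and-measure guessing probability is 1: there exists a feasible solution {G^{a,e|x}} of the guessing SDP with Σ_e Tr[G^{e,e|x*} ρ_A] = 1 for any density operator ρ_A. Explicitly, taking G^{a,e|x} = J^{a,e|x} for x ≠ x* (the joint POVMs witnessing star-compatibility) and G^{a,e|x*} = δ_{a,e} M^{a|x*} achieves this. -/
open Matrix BigOperators ComplexOrder

/-- star-compatible PMDs admit a feasible guessing strategy achieving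
guessing probability 1 (for every density operator ρ_A). -/
theorem starCompatible_guess_one (d : ℕ) (hd : 0 < d)
    (A X : Type) [Fintype A] [DecidableEq A] [Fintype X] [DecidableEq X] (xs : X)
    (M : X → A → Matrix (Fin d) (Fin d) ℂ)
    (hpsd : ∀ x a, (M x a).PosSemidef) (hpovm : ∀ x, ∑ a, M x a = 1)
    (J : X → A → A → Matrix (Fin d) (Fin d) ℂ)
    (hJpsd : ∀ x, x ≠ xs → ∀ a b, (J x a b).PosSemidef)
    (hJsum : ∀ x, x ≠ xs → ∑ a, ∑ b, J x a b = 1)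
    (hJm1 : ∀ x, x ≠ xs → ∀ a, ∑ b, J x a b = M x a)
    (hJm2 : ∀ x, x ≠ xs → ∀ b, ∑ a, J x a b = M xs b) :
    ∃ G : X → A → A → Matrix (Fin d) (Fin d) ℂ,
      (∀ x a e, (G x a e).PosSemidef) ∧
      (∀ x a, ∑ e, G x a e = M x a) ∧
      (∀ x e, ∑ a, G x a e = ∑ a, G xs a e) ∧
      (G = fun x a e => if x = xs then (if a = e then M xs a else 0) else J x a e) ∧
      (∀ ρA : Matrix (Fin d) (Fin d) ℂ, ρA.PosSemidef → ρA.trace = 1 →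
        ∑ e, (G xs e e * ρA).trace = 1) := by
  refine ⟨_, ?_, ?_, ?_, rfl, ?_⟩
  · intro x a e
    split_ifs with hx hae
    · exact hpsd xs a
    · exact Matrix.PosSemidef.zero
    · exact hJpsd x hx a e
  · intro x a
    by_cases hx : x = xs
    · simp [hx]
    · simpa [hx] using hJm1 x hx a
  · intro x e
    by_cases hx : x = xs
    · rw [hx]
    · simpa [hx] using hJm2 x hx e
  · intro ρA _ hρ
    simp only [if_true]
    rw [← Matrix.trace_sum, ← Finset.sum_mul, hpovm, one_mul, hρ]
end

section
/- Theorem (weight lower bound): for a PMD {M^{a|x}} on H_A with star-incompatibility weight W^{x*}(M) (the minimal w ∈ [0,1] such that M^{a|x} = (1−w)F^{a|x} + wE^{a|x} with {F} star-compatible w.r.t. x* and {E} a PMD), and for any bipartite state ρ_AB, the assemblage guessing probability satisfies W^{x*}(M) ≥ (|A|/(|A|−1)) · (1 − p_guess^{x*}(σ(M, ρ_AB))), equivalently p_guess^{x*}(σ(M, ρ_AB)) ≥ 1 − W^{x*}(M)(1 − 1/|A|), assuming an optimal decomposition achieving the weight exists. -/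
open Matrix BigOperators Kronecker ComplexOrder

/-- Partial trace over the first tensor factor. -/
noncomputable def trA {dA dB : Type*} [Fintype dA]
    (M : Matrix (dA × dB) (dA × dB) ℂ) : Matrix dB dB ℂ :=
  Matrix.of fun j j' => ∑ i, M (i, j) (i, j')

/-- The guessing probability of an assemblage `σ` for target setting `xs`. -/
noncomputable def pguessAsm {dB : Type*} [Fintype dB] {A X : Type} [Fintype A] [Fintype X]
    (σ : X → A → Matrix dB dB ℂ) (xs : X) : ℝ :=
  sSup {r : ℝ | ∃ τ : X → A → A → Matrix dB dB ℂ,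
    (∀ x a e, (τ x a e).PosSemidef) ∧
    (∀ x a, ∑ e, τ x a e = σ x a) ∧
    (∀ x e, ∑ a, τ x a e = ∑ a, τ xs a e) ∧
    r = (∑ e, (τ xs e e).trace).re}

/-- Star-compatibility of a PMD `F` w.r.t. the setting `xs`. -/
def StarCompatible {dA : Type*} [Fintype dA] [DecidableEq dA] {A X : Type}
    [Fintype A] (F : X → A → Matrix dA dA ℂ) (xs : X) : Prop :=
  ∃ J : X → A → A → Matrix dA dA ℂ,
    (∀ x, x ≠ xs → ∀ a b, (J x a b).PosSemidef) ∧
    (∀ x, x ≠ xs → ∑ a, ∑ b, J x a b = 1) ∧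
    (∀ x, x ≠ xs → ∀ a, ∑ b, J x a b = F x a) ∧
    (∀ x, x ≠ xs → ∀ b, ∑ a, J x a b = F xs b)

/-- The operator steered on the second factor of `ρ` by the effect `N` on the first, as a linear
function of `N`. -/
noncomputable def steer {dA dB : Type*} [Fintype dA] [Fintype dB] [DecidableEq dB]
    (ρ : Matrix (dA × dB) (dA × dB) ℂ) : Matrix dA dA ℂ →ₗ[ℂ] Matrix dB dB ℂ where
  toFun N := trA ((N ⊗ₖ (1 : Matrix dB dB ℂ)) * ρ)
  map_add' N N' := by
    ext j j'
    simp [trA, add_kronecker, add_mul, Finset.sum_add_distrib]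
  map_smul' c N := by
    ext j j'
    simp [trA, smul_kronecker, Finset.mul_sum]

theorem steer_apply {dA dB : Type*} [Fintype dA] [Fintype dB] [DecidableEq dB]
    (ρ : Matrix (dA × dB) (dA × dB) ℂ) (N : Matrix dA dA ℂ) :
    steer ρ N = trA ((N ⊗ₖ (1 : Matrix dB dB ℂ)) * ρ) := rfl

theorem trace_trA {dA dB : Type*} [Fintype dA] [Fintype dB]
    (R : Matrix (dA × dB) (dA × dB) ℂ) : (trA R).trace = R.trace := by
  simp only [trA, trace, diag_apply, of_apply, Fintype.sum_prod_type]
  exact Finset.sum_comm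

theorem posSemidef_trA {dA dB : Type*} [Fintype dA] [Fintype dB]
    {R : Matrix (dA × dB) (dA × dB) ℂ} (hR : R.PosSemidef) : (trA R).PosSemidef := by
  have h : trA R = ∑ i, R.submatrix (fun j => (i, j)) (fun j => (i, j)) := by
    ext j j'
    simp [trA, Matrix.sum_apply]
  rw [h]
  exact posSemidef_sum _ fun i _ => hR.submatrix _

/-- Operators on the traced-out factor can be cycled under the partial trace. -/
theorem trA_kronecker_one_mul_comm {dA dB : Type*} [Fintype dA] [Fintype dB] [DecidableEq dB]
    (K : Matrix dA dA ℂ) (R : Matrix (dA × dB) (dA × dB) ℂ) :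
    trA ((K ⊗ₖ (1 : Matrix dB dB ℂ)) * R) = trA (R * (K ⊗ₖ (1 : Matrix dB dB ℂ))) := by
  ext j j'
  simp only [trA, of_apply, mul_apply, kroneckerMap_apply, one_apply, Fintype.sum_prod_type,
    mul_ite, ite_mul, mul_one, mul_zero, zero_mul, Finset.sum_ite_eq, Finset.sum_ite_eq',
    Finset.mem_univ, if_true]
  rw [Finset.sum_comm]
  simp only [mul_comm]

open scoped MatrixOrder in
theorem posSemidef_steer {dA dB : Type*} [Fintype dA] [Fintype dB] [DecidableEq dA]
    [DecidableEq dB] {ρ : Matrix (dA × dB) (dA × dB) ℂ} (hρ : ρ.PosSemidef)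
    {N : Matrix dA dA ℂ} (hN : N.PosSemidef) : (steer ρ N).PosSemidef := by
  obtain ⟨C, rfl⟩ := CStarAlgebra.nonneg_iff_eq_star_mul_self.mp hN.nonneg
  have h : (Cᴴ * C) ⊗ₖ (1 : Matrix dB dB ℂ)
      = (Cᴴ ⊗ₖ (1 : Matrix dB dB ℂ)) * (C ⊗ₖ (1 : Matrix dB dB ℂ)) := by
    rw [← mul_kronecker_mul, one_mul]
  rw [star_eq_conjTranspose, steer_apply, h, mul_assoc, trA_kronecker_one_mul_comm]
  have hC : Cᴴ ⊗ₖ (1 : Matrix dB dB ℂ) = (C ⊗ₖ (1 : Matrix dB dB ℂ))ᴴ := by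
    rw [conjTranspose_kronecker, conjTranspose_one]
  rw [hC]
  exact posSemidef_trA (hρ.mul_mul_conjTranspose_same _)

theorem trace_steer_one {dA dB : Type*} [Fintype dA] [Fintype dB] [DecidableEq dA]
    [DecidableEq dB] (ρ : Matrix (dA × dB) (dA × dB) ℂ) : (steer ρ 1).trace = ρ.trace := by
  rw [steer_apply, one_kronecker_one, one_mul, trace_trA]

/-- Every feasible point of the guessing problem is a lower bound for its value. -/
theorem le_pguessAsm {dB : Type*} [Fintype dB] {A X : Type} [Fintype A] [Fintype X]
    (σ : X → A → Matrix dB dB ℂ) (xs : X) (τ : X → A → A → Matrix dB dB ℂ)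
    (hτ : ∀ x a e, (τ x a e).PosSemidef) (hσ : ∀ x a, ∑ e, τ x a e = σ x a)
    (hns : ∀ x e, ∑ a, τ x a e = ∑ a, τ xs a e) :
    (∑ e, (τ xs e e).trace).re ≤ pguessAsm σ xs := by
  refine le_csSup ⟨(∑ a, (σ xs a).trace).re, ?_⟩ ⟨τ, hτ, hσ, hns, rfl⟩
  rintro r ⟨τ', hτ', hσ', -, rfl⟩
  have h : ∑ e, (τ' xs e e).trace ≤ ∑ a, (σ xs a).trace := by
    refine Finset.sum_le_sum fun a _ => ?_
    rw [← hσ', trace_sum]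
    exact Finset.single_le_sum (f := fun e => (τ' xs a e).trace)
      (fun e _ => (hτ' xs a e).trace_nonneg) (Finset.mem_univ a)
  exact (Complex.le_def.mp h).1

/-- A joint parent of the setting `xs` and of each other setting, including `xs` itself. -/
theorem StarCompatible.exists_parent {dA : Type*} [Fintype dA] [DecidableEq dA] {A X : Type}
    [Fintype A] {F : X → A → Matrix dA dA ℂ} {xs : X} (hF : StarCompatible F xs)
    (hpsd : ∀ a, (F xs a).PosSemidef) :
    ∃ J : X → A → A → Matrix dA dA ℂ, (∀ x a b, (J x a b).PosSemidef) ∧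
      (∀ x a, ∑ b, J x a b = F x a) ∧ (∀ x b, ∑ a, J x a b = F xs b) ∧
      ∀ a, J xs a a = F xs a := by
  classical
  obtain ⟨J, hJ, -, hJF, hJs⟩ := hF
  refine ⟨fun x a b => if x = xs then (if a = b then F xs a else 0) else J x a b,
    fun x a b => ?_, fun x a => ?_, fun x b => ?_, fun a => by simp⟩
  · dsimp only
    split_ifs with hx
    · exact hpsd a
    · exact PosSemidef.zero
    · exact hJ x hx a b
  · by_cases hx : x = xs
    · simp [hx]
    · simpa [hx] using hJF x hx a
  · by_cases hx : x = xs
    · simp [hx]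
    · simpa [hx] using hJs x hx b

/-- the star-incompatibility weight of a PMD is bounded below by
(|A|/(|A|−1))·(1 − p_guess of any assemblage it generates). -/
theorem weight_lower_bound {dA dB : Type*} [Fintype dA] [Fintype dB]
    [DecidableEq dA] [DecidableEq dB]
    (A X : Type) [Fintype A] [Nonempty A] [Fintype X] (xs : X)
    (hA : 2 ≤ Fintype.card A)
    (M : X → A → Matrix dA dA ℂ)
    (hpsd : ∀ x a, (M x a).PosSemidef) (hpovm : ∀ x, ∑ a, M x a = 1)
    (w : ℝ) (hw0 : 0 ≤ w) (hw1 : w ≤ 1)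
    -- an optimal decomposition achieving the star-incompatibility weight `w`
    (F E : X → A → Matrix dA dA ℂ)
    (hFpsd : ∀ x a, (F x a).PosSemidef) (hFpovm : ∀ x, ∑ a, F x a = 1)
    (hEpsd : ∀ x a, (E x a).PosSemidef) (hEpovm : ∀ x, ∑ a, E x a = 1)
    (hdecomp : ∀ x a, M x a = ((1 - w : ℝ) : ℂ) • F x a + ((w : ℝ) : ℂ) • E x a)
    (hFcompat : StarCompatible F xs)
    (hmin : ∀ w' : ℝ, 0 ≤ w' → w' ≤ 1 →
      ∀ F' E' : X → A → Matrix dA dA ℂ,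
        (∀ x a, (F' x a).PosSemidef) → (∀ x, ∑ a, F' x a = 1) →
        (∀ x a, (E' x a).PosSemidef) → (∀ x, ∑ a, E' x a = 1) →
        (∀ x a, M x a = ((1 - w' : ℝ) : ℂ) • F' x a + ((w' : ℝ) : ℂ) • E' x a) →
        StarCompatible F' xs → w ≤ w')
    (ρAB : Matrix (dA × dB) (dA × dB) ℂ) (hρ : ρAB.PosSemidef) (htr : ρAB.trace = 1) :
    let σ : X → A → Matrix dB dB ℂ :=
      fun x a => trA ((M x a ⊗ₖ (1 : Matrix dB dB ℂ)) * ρAB)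
    (Fintype.card A : ℝ) / (Fintype.card A - 1) * (1 - pguessAsm σ xs) ≤ w ∧
    1 - w * (1 - 1 / Fintype.card A) ≤ pguessAsm σ xs := by
  intro σ
  have hcard : (0 : ℝ) < Fintype.card A := by exact_mod_cast Fintype.card_pos
  have hcard' : (0 : ℝ) < Fintype.card A - 1 := by
    have : (2 : ℝ) ≤ Fintype.card A := by exact_mod_cast hA
    linarith
  have hcardC : (Fintype.card A : ℂ) ≠ 0 := by exact_mod_cast hcard.ne'
  obtain ⟨J, hJ, hJF, hJs, hJd⟩ := hFcompat.exists_parent (hFpsd xs)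
  let N : X → A → A → Matrix dA dA ℂ := fun x a e =>
    ((1 - w : ℝ) : ℂ) • J x a e + ((w / Fintype.card A : ℝ) : ℂ) • E x a
  have hN : ∀ x a e, (N x a e).PosSemidef := fun x a e =>
    ((hJ x a e).smul (Complex.zero_le_real.mpr (sub_nonneg.mpr hw1))).add
      ((hEpsd x a).smul (Complex.zero_le_real.mpr (by positivity)))
  have hNM : ∀ x a, ∑ e, N x a e = M x a := fun x a => by
    simp only [N, Finset.sum_add_distrib, ← Finset.smul_sum, hJF, hdecomp, Finset.sum_const,
      Finset.card_univ]
    congr 1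
    rw [← Nat.cast_smul_eq_nsmul ℂ, smul_smul]
    congr 1
    push_cast
    field_simp
  have hNs : ∀ x e, ∑ a, N x a e
      = ((1 - w : ℝ) : ℂ) • F xs e + ((w / Fintype.card A : ℝ) : ℂ) • 1 := fun x e => by
    simp only [N, Finset.sum_add_distrib, ← Finset.smul_sum, hJs, hEpovm]
  have hNd : ∑ e, N xs e e = (((1 - w) + w / Fintype.card A : ℝ) : ℂ) • 1 := by
    simp only [N, hJd, Finset.sum_add_distrib, ← Finset.smul_sum, hFpovm, hEpovm, ← add_smul]
    push_cast
    rfl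
  have hguess := le_pguessAsm σ xs (fun x a e => steer ρAB (N x a e))
    (fun x a e => posSemidef_steer hρ (hN x a e))
    (fun x a => by rw [← map_sum, hNM, steer_apply])
    (fun x e => by rw [← map_sum, ← map_sum, hNs, hNs])
  rw [← trace_sum, ← map_sum, hNd, map_smul, trace_smul, trace_steer_one, htr, smul_eq_mul,
    mul_one, Complex.ofReal_re] at hguess
  have hbound : 1 - w * (1 - 1 / Fintype.card A) ≤ pguessAsm σ xs := by
    refine le_trans (le_of_eq ?_) hguess
    ring
  refine ⟨?_, hbound⟩
  have hscale : w * (1 - 1 / Fintype.card A) * Fintype.card A = w * (Fintype.card A - 1) := by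
    field_simp
  rw [div_mul_eq_mul_div, div_le_iff₀ hcard']
  nlinarith [mul_le_mul_of_nonneg_right hbound hcard.le]
end
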